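/- arXiv:math/9909142 — 2 statements merged into one kernel-verified Lean document; each statement's English description precedes it below -/
import Mathlib

section
/- Invariants generate the function field: Let k be an algebraically closed field of characteristic zero and K an algebraically closed field extension of k of infinite transcendence degree over k. Let F be a field containing K that is finitely generated as a field extension of K, equipped with a continuous semilinear action of Aut(K/k) (an action of Aut(K/k) on F by ring automorphisms with σ(c·x) = σ(c)·σ(x) for all σ ∈ Aut(K/k), c ∈ K, x ∈ F, such that every x ∈ F is fixed by all σ ∈ Aut(K/k) fixing pointwise some intermediate field of K/k finitely generated over k). Then the fixed field M = { x ∈ F : σ(x) = x for all σ ∈ Aut(K/k) } generates F as a field extension of K, i.e., F = K(M). -/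
/-!
Write `G = Aut(K/k)` and, for `S ⊆ K`, let `F^S` be the subfield of `F` fixed by the automorphisms
fixing `S` pointwise. Continuity and finite generation give `F = K·F^T` for some finite `T`. A
maximal algebraically independent `U ⊆ T` does equally well, by Lagrange interpolation over the
finite conjugacy classes of elements algebraic over `k(U)`.

Let `B` be a transcendence basis of `K` over `k(U)` and `D` the union of the `F^S` over the finite
`S ⊆ B`. As `B` is infinite, it contains a `G`-translate `V` of `U`, so `F = K·F^V`. Let `H` be the
group of automorphisms that fix `U` pointwise and permute `B`. It acts on `D`, so Artin's argument
makes the `H`-invariants of `F` linearly disjoint from `D` over the `H`-invariants of `D`. The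
latter are fixed by `G`: a permutation of `B` moves `S` away from itself, and an element of `F`
fixed over two independent generic tuples is fixed by all of `G`. Applied to the field `K` in `F`,
the same disjointness yields `F^U ⊆ K^(U ∪ V)·F^V`, and `K^(U ∪ V) = K^U·K^V` since these are the
perfect closures of `k(U ∪ V)`, `k(U)` and `k(V)`. Hence `F^U ⊆ K^U·D`, and the modular law for
linearly disjoint fields removes `D`, which leaves `F = K·F^U = K·F^G`.
-/

theorem nonempty_embedding_of_infinite (α β : Type*) [Finite α] [Infinite β] :
    Nonempty (α ↪ β) := by
  obtain ⟨n, ⟨e⟩⟩ := Finite.exists_equiv_fin α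
  exact ⟨e.toEmbedding.trans (Fin.valEmbedding.trans (Infinite.natEmbedding β))⟩

theorem exists_perm_forall_apply_notMem {α : Type*} [Infinite α] (s : Finset α) :
    ∃ π : Equiv.Perm α, ∀ a ∈ s, π a ∉ s := by
  have : Infinite ↥((s : Set α)ᶜ) := s.finite_toSet.infinite_compl.to_subtype
  obtain ⟨f⟩ := nonempty_embedding_of_infinite (s : Set α) ↥((s : Set α)ᶜ)
  obtain ⟨π, hπ⟩ := Cardinal.extend_function_of_lt (f.trans (.subtype _))
    ((Cardinal.lt_aleph0_of_finite _).trans_le (Cardinal.aleph0_le_mk α)) ⟨.refl α⟩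
  exact ⟨π, fun a ha => hπ ⟨a, ha⟩ ▸ (f ⟨a, ha⟩).2⟩

/-! ### Automorphisms of algebraically closed fields -/

theorem exists_algEquiv_of_isTranscendenceBasis {R K₁ K₂ ι κ : Type*} [CommRing R]
    [Field K₁] [Field K₂] [Algebra R K₁] [Algebra R K₂] [IsAlgClosed K₁] [IsAlgClosed K₂]
    {v : ι → K₁} {w : κ → K₂} (hv : IsTranscendenceBasis R v) (hw : IsTranscendenceBasis R w)
    (e : ι ≃ κ) : ∃ g : K₁ ≃ₐ[R] K₂, ∀ i, g (v i) = w (e i) := by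
  have := IsAlgClosed.isAlgClosure_of_transcendence_basis v hv
  have := IsAlgClosed.isAlgClosure_of_transcendence_basis w hw
  let e' : Algebra.adjoin R (Set.range v) ≃ₐ[R] Algebra.adjoin R (Set.range w) :=
    hv.1.aevalEquiv.symm.trans ((MvPolynomial.renameEquiv R e).trans hw.1.aevalEquiv)
  let g := IsAlgClosure.equivOfEquiv K₁ K₂ e'.toRingEquiv
  have hg (x : Algebra.adjoin R (Set.range v)) : g x = e' x :=
    IsAlgClosure.equivOfEquiv_algebraMap K₁ K₂ e'.toRingEquiv x
  refine ⟨AlgEquiv.ofRingEquiv (f := g) fun r => ?_, fun i => ?_⟩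
  · exact (hg (algebraMap R _ r)).trans (by rw [e'.commutes]; rfl)
  · have hX : e' (hv.1.aevalEquiv (.X i)) = hw.1.aevalEquiv (.X (e i)) := by simp [e']
    have := hg (hv.1.aevalEquiv (.X i))
    rw [hX] at this
    simpa using this

universe u in
theorem exists_algEquiv_extending {A : Type*} {K₁ K₂ : Type u} [Field A] [Field K₁] [Field K₂]
    [Algebra A K₁] [Algebra A K₂] [IsAlgClosed K₁] [IsAlgClosed K₂]
    (h : Algebra.trdeg A K₁ = Algebra.trdeg A K₂) {L : IntermediateField A K₁} [FinTrdeg A L]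
    (j : L →ₐ[A] K₂) : ∃ σ : K₁ ≃ₐ[A] K₂, ∀ x : L, σ x = j x := by
  let := j.toRingHom.toAlgebra
  have : IsScalarTower A L K₂ := .of_algebraMap_eq fun x => (j.commutes x).symm
  have trdeg_eq : Algebra.trdeg L K₁ = Algebra.trdeg L K₂ :=
    Cardinal.eq_of_add_eq_add_left (by rw [trdeg_add_eq, trdeg_add_eq, h]) (trdeg_lt_aleph0 A L)
  obtain ⟨s, hs⟩ := exists_isTranscendenceBasis L K₁
  obtain ⟨t, ht⟩ := exists_isTranscendenceBasis L K₂
  rw [← hs.cardinalMk_eq_trdeg, ← ht.cardinalMk_eq_trdeg] at trdeg_eq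
  obtain ⟨e⟩ := Cardinal.eq.1 trdeg_eq
  obtain ⟨g, -⟩ := exists_algEquiv_of_isTranscendenceBasis hs ht e
  exact ⟨g.restrictScalars A, g.commutes⟩

theorem exists_algEquiv_of_algebraicIndependent {A K : Type*} [Field A] [Field K] [Algebra A K]
    [IsAlgClosed K] {ι : Type*} [Finite ι] {u v : ι → K}
    (hu : AlgebraicIndependent A u) (hv : AlgebraicIndependent A v) :
    ∃ σ : K ≃ₐ[A] K, ∀ i, σ (u i) = v i := by
  have : FinTrdeg A (IntermediateField.adjoin A (Set.range u)) :=
    have := IntermediateField.essFiniteType_iff.2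
      (IntermediateField.fg_adjoin_of_finite (F := A) (Set.finite_range u))
    inferInstance
  obtain ⟨σ, hσ⟩ := exists_algEquiv_extending rfl
    ((IntermediateField.val _).comp (hu.aevalEquivField.symm.trans hv.aevalEquivField).toAlgHom)
  refine ⟨σ, fun i => ?_⟩
  have := hσ (hu.aevalEquivField (algebraMap (MvPolynomial ι A) _ (.X i)))
  simpa using this

theorem exists_algEquiv_of_isConjRoot {A K : Type*} [Field A] [Field K] [Algebra A K]
    [IsAlgClosed K] {x y : K} (hx : IsIntegral A x) (h : IsConjRoot A x y) :
    ∃ σ : K ≃ₐ[A] K, σ x = y := by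
  have := IntermediateField.adjoin.finiteDimensional hx
  obtain ⟨σ, hσ⟩ := exists_algEquiv_extending rfl
    ((IntermediateField.algHomAdjoinIntegralEquiv A hx).symm
      ⟨y, (isConjRoot_iff_mem_minpoly_aroots hx).1 h⟩)
  refine ⟨σ, ?_⟩
  simpa [IntermediateField.algHomAdjoinIntegralEquiv_symm_apply_gen] using
    hσ (IntermediateField.AdjoinSimple.gen A x)

theorem mem_perfectClosure_of_forall_algEquiv {A K : Type*} [Field A] [Field K] [Algebra A K]
    [IsAlgClosed K] {x : K} (h : ∀ σ : K ≃ₐ[A] K, σ x = x) : x ∈ perfectClosure A K := by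
  by_cases hx : IsIntegral A x
  · classical
    have roots_eq : ((minpoly A x).aroots K).toFinset = {x} := by
      ext y
      rw [Multiset.mem_toFinset, ← isConjRoot_iff_mem_minpoly_aroots hx, Finset.mem_singleton]
      refine ⟨fun hy => ?_, fun hy => hy ▸ .refl⟩
      obtain ⟨σ, rfl⟩ := exists_algEquiv_of_isConjRoot hx hy
      exact h σ
    rw [mem_perfectClosure_iff_natSepDegree_eq_one,
      Polynomial.natSepDegree_eq_of_isAlgClosed K, roots_eq, Finset.card_singleton]
  · have hx' : Transcendental A x := fun halg => hx halg.isIntegral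
    have hx1 : Transcendental A (x + 1) := fun halg =>
      hx' (by simpa using halg.sub (isAlgebraic_one (R := A)))
    obtain ⟨σ, hσ⟩ := exists_algEquiv_of_algebraicIndependent (ι := Unit)
      (u := fun _ => x) (v := fun _ => x + 1)
      (algebraicIndependent_unique_type_iff.2 hx') (algebraicIndependent_unique_type_iff.2 hx1)
    simpa [h] using hσ ()

/-! ### Linear disjointness from invariants -/

section Artin

variable {H F : Type*} [Group H] [Field F] [MulSemiringAction H F] (D : Subfield F)
  [IsInvariantSubfield H D]

theorem mem_span_inf_fixedPoints {ι : Type*} {v : ι → F} {s : Finset ι}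
    (hv : ∀ i, v i ∈ FixedPoints.subfield H F) (hli : LinearIndepOn D v s)
    {x : F} (hx : x ∈ FixedPoints.subfield H F) (hspan : x ∈ Submodule.span D (v '' s)) :
    x ∈ Submodule.span ↥(D ⊓ FixedPoints.subfield H F) (v '' s) := by
  rw [Submodule.mem_span_image_finset_iff_exists_fun] at hspan ⊢
  obtain ⟨c, rfl⟩ := hspan
  have c_fixed (i : s) : (c i : F) ∈ FixedPoints.subfield H F := by
    intro h
    have hsum : ∑ i, (h • c i - c i) • v i = 0 := by
      simp only [sub_smul, Finset.sum_sub_distrib, sub_eq_zero]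
      refine Eq.trans ?_ (hx h)
      simp only [Finset.smul_sum, Subfield.smul_def, smul_eq_mul, smul_mul', hv _ h]
      rfl
    exact congrArg Subtype.val (sub_eq_zero.1 (Fintype.linearIndependent_iff.1 hli _ hsum i))
  exact ⟨fun i => ⟨c i, (c i).2, c_fixed i⟩, rfl⟩

theorem linearIndependent_of_inf_fixedPoints {ι : Type*} {v : ι → F}
    (hv : ∀ i, v i ∈ FixedPoints.subfield H F)
    (hli : LinearIndependent ↥(D ⊓ FixedPoints.subfield H F) v) : LinearIndependent D v := by
  classical
  refine linearIndependent_iff_finset_linearIndependent.2 fun s => ?_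
  change LinearIndepOn D v s
  induction s using Finset.induction_on with
  | empty => simp
  | insert a s has ih =>
    have hR := hli.linearIndepOn (s := insert a ↑s)
    rw [linearIndepOn_insert (by simpa using has)] at hR
    rw [Finset.coe_insert, linearIndepOn_insert (by simpa using has)]
    exact ⟨ih, fun h => hR.2 (mem_span_inf_fixedPoints D hv ih (hv a) h)⟩

theorem linearDisjoint_fixedPoints :
    (Subfield.extendScalars (inf_le_right : D ⊓ FixedPoints.subfield H F ≤ _)).LinearDisjoint
      (Subfield.extendScalars (inf_le_left : D ⊓ FixedPoints.subfield H F ≤ D)) := by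
  let A := Subfield.extendScalars (inf_le_right : D ⊓ FixedPoints.subfield H F ≤ _)
  let b := Module.Basis.ofVectorSpace ↥(D ⊓ FixedPoints.subfield H F) A
  have hb : LinearIndependent ↥(D ⊓ FixedPoints.subfield H F) (fun i => (b i : F)) :=
    b.linearIndependent.map' A.val.toLinearMap (LinearMap.ker_eq_bot.2 A.val.injective)
  exact .of_basis_left b (linearIndependent_of_inf_fixedPoints D (fun i => (b i).2) hb)

end Artin

open IntermediateField in
theorem linearDisjoint_modular {R F : Type*} [Field R] [Field F] [Algebra R F]
    {A C D : IntermediateField R F} (h : A.LinearDisjoint D) (hC : C ≤ A) :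
    (C ⊔ D) ⊓ A ≤ C := by
  intro y hy
  obtain ⟨hy, hyA⟩ := IntermediateField.mem_inf.1 hy
  rw [← adjoin_self R D, ← restrictScalars_adjoin_eq_sup, mem_restrictScalars,
    mem_adjoin_iff_div] at hy
  obtain ⟨p, hp, q, hq, rfl⟩ := hy
  obtain rfl | hq0 := eq_or_ne q 0
  · simp
  let b := Module.Basis.ofVectorSpace R D
  have hspan : Subalgebra.toSubmodule (Algebra.adjoin C (D : Set F)) =
    Submodule.span C (Set.range fun i => (b i : F)) := D.toSubalgebra.adjoin_eq_span_basis C b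
  rw [← Subalgebra.mem_toSubmodule, hspan, Finsupp.mem_span_range_iff_exists_finsupp] at hp hq
  obtain ⟨c, hc⟩ := hp
  obtain ⟨d, hd⟩ := hq
  let e : C →+ A := (inclusion hC : C →+* A)
  have hrel : (⟨p / q, hyA⟩ : A) • d.mapRange e e.map_zero = c.mapRange e e.map_zero := by
    apply h.linearIndependent_right b.linearIndependent
    calc Finsupp.linearCombination A (D.val ∘ b) ((⟨p / q, hyA⟩ : A) • d.mapRange e e.map_zero)
        = p / q * d.sum fun i a => a • (b i : F) := by
          rw [map_smul, Finsupp.linearCombination_apply, Finsupp.sum_mapRange_index (by simp)]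
          rfl
      _ = c.sum fun i a => a • (b i : F) := by rw [hc, hd, div_mul_cancel₀ p hq0]
      _ = Finsupp.linearCombination A (D.val ∘ b) (c.mapRange e e.map_zero) := by
          rw [Finsupp.linearCombination_apply, Finsupp.sum_mapRange_index (by simp)]
          rfl
  obtain ⟨i, hi⟩ : ∃ i, d i ≠ 0 := by
    by_contra! hzero
    exact hq0 (by simp [← hd, Finsupp.sum, hzero])
  have hi' : p / q * (d i : F) = c i := congrArg Subtype.val (DFunLike.congr_fun hrel i)
  rw [eq_div_of_mul_eq (by exact_mod_cast hi) hi']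
  exact C.div_mem (c i).2 (d i).2

theorem sup_inf_fixedPoints_le {H F : Type*} [Group H] [Field F] [MulSemiringAction H F]
    (C D : Subfield F) [IsInvariantSubfield H D] (hC : C ≤ FixedPoints.subfield H F)
    (hD : D ⊓ FixedPoints.subfield H F ≤ C) : (C ⊔ D) ⊓ FixedPoints.subfield H F ≤ C := by
  have := linearDisjoint_modular (linearDisjoint_fixedPoints (H := H) D)
    (C := Subfield.extendScalars hD) hC
  intro x hx
  exact this ⟨by simpa [← IntermediateField.mem_toSubfield] using hx.1, hx.2⟩

/-! ### Fixed fields of pointwise stabilizers -/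

theorem mem_subfield_of_forall_algEquiv {K : Type*} [Field K] [IsAlgClosed K] {C : Subfield K}
    (p : ℕ) [ExpChar K p] (hC : ∀ n, C ≤ C.map (iterateFrobenius K p n)) {x : K}
    (h : ∀ σ : K ≃ₐ[C] K, σ x = x) : x ∈ C := by
  have : ExpChar C p := C.subtype.expChar C.subtype.injective p
  obtain ⟨n, y, hy⟩ := (mem_perfectClosure_iff_pow_mem p).1
    (mem_perfectClosure_of_forall_algEquiv h)
  obtain ⟨z, hz, hzx⟩ := hC n y.2
  rwa [← (bijective_iterateFrobenius K p n).1 (hzx.trans hy)]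

/-- The subfield `F^S` of the elements of `F` fixed by every `k`-automorphism of `K` that fixes the
set `S ⊆ K` pointwise. -/
abbrev fixedSubfield (k : Type*) {K : Type*} [Field k] [Field K] [Algebra k K] (F : Type*) [Field F]
    [MulSemiringAction (K ≃ₐ[k] K) F] (S : Set K) : Subfield F :=
  FixedPoints.subfield (fixingSubgroup (K ≃ₐ[k] K) S) F

section fixedSubfield

variable {k K F : Type*} [Field k] [Field K] [Algebra k K] [Field F]
  [MulSemiringAction (K ≃ₐ[k] K) F]

theorem mem_fixedSubfield_iff {S : Set K} {x : F} :
    x ∈ fixedSubfield k F S ↔ ∀ σ : K ≃ₐ[k] K, (∀ s ∈ S, σ s = s) → σ • x = x :=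
  ⟨fun h σ hσ => h ⟨σ, fun s => hσ s s.2⟩, fun h σ => h σ fun s hs => σ.2 ⟨s, hs⟩⟩

theorem fixedSubfield_mono {S T : Set K} (h : S ⊆ T) : fixedSubfield k F S ≤ fixedSubfield k F T :=
  fun _ hx => mem_fixedSubfield_iff.2 fun σ hσ =>
    mem_fixedSubfield_iff.1 hx σ fun s hs => hσ s (h hs)

theorem smul_mem_fixedSubfield {S T : Set K} {σ : K ≃ₐ[k] K} (h : ∀ s ∈ S, σ s ∈ T) {x : F}
    (hx : x ∈ fixedSubfield k F S) : σ • x ∈ fixedSubfield k F T := by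
  refine mem_fixedSubfield_iff.2 fun τ hτ => ?_
  rw [← inv_smul_eq_iff, ← mul_smul, ← mul_smul]
  refine mem_fixedSubfield_iff.1 hx _ fun s hs => ?_
  simp [hτ _ (h s hs)]

theorem subset_fixedSubfield (S : Set K) : S ⊆ fixedSubfield k K S :=
  fun s hs => mem_fixedSubfield_iff.2 fun _ hσ => hσ s hs

theorem adjoin_le_fixedSubfield (S : Set K) :
    (IntermediateField.adjoin k S).toSubfield ≤ fixedSubfield k K S := by
  refine IntermediateField.adjoin_le_subfield k S ?_ (subset_fixedSubfield S)
  rintro _ ⟨a, rfl⟩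
  exact mem_fixedSubfield_iff.2 fun σ _ => σ.commutes a

theorem le_map_iterateFrobenius_fixedSubfield [IsAlgClosed K] (p n : ℕ) [ExpChar K p]
    (S : Set K) :
    fixedSubfield k K S ≤ (fixedSubfield k K S).map (iterateFrobenius K p n) := by
  intro x hx
  obtain ⟨y, rfl⟩ := (bijective_iterateFrobenius K p n).2 x
  refine ⟨y, mem_fixedSubfield_iff.2 fun σ hσ => (bijective_iterateFrobenius K p n).1 ?_, rfl⟩
  exact (map_pow σ y (p ^ n)).symm.trans (mem_fixedSubfield_iff.1 hx σ hσ)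

theorem fixedSubfield_union_le_sup [IsAlgClosed K] (S T : Set K) :
    fixedSubfield k K (S ∪ T) ≤ fixedSubfield k K S ⊔ fixedSubfield k K T := by
  intro x hx
  let C := fixedSubfield k K S ⊔ fixedSubfield k K T
  have mem_left {y : K} (hy : y ∈ fixedSubfield k K S) : y ∈ C := le_sup_left (α := Subfield K) hy
  have mem_right {y : K} (hy : y ∈ fixedSubfield k K T) : y ∈ C := le_sup_right (α := Subfield K) hy
  obtain ⟨p, _⟩ := ExpChar.exists K
  refine mem_subfield_of_forall_algEquiv (C := C) p (fun n => ?_) fun σ => ?_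
  · rw [Subfield.map_sup]
    exact sup_le_sup (le_map_iterateFrobenius_fixedSubfield p n S)
      (le_map_iterateFrobenius_fixedSubfield p n T)
  · let σ' : K ≃ₐ[k] K := AlgEquiv.ofRingEquiv (f := (σ : K ≃+* K)) fun a =>
      σ.commutes ⟨algebraMap k K a, mem_left (adjoin_le_fixedSubfield S
        ((IntermediateField.adjoin k S).algebraMap_mem a))⟩
    refine mem_fixedSubfield_iff.1 hx σ' ?_
    rintro s (hs | hs)
    · exact σ.commutes ⟨s, mem_left (subset_fixedSubfield S hs)⟩
    · exact σ.commutes ⟨s, mem_right (subset_fixedSubfield T hs)⟩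

end fixedSubfield

theorem mem_span_range_sum_pow_smul {K M ι : Type*} [Field K] [AddCommGroup M] [Module K M]
    [Fintype ι] {ρ : ι → K} (hρ : Function.Injective ρ) (X : ι → M) (i : ι) :
    X i ∈ Submodule.span K (Set.range fun n : ℕ => ∑ j, ρ j ^ n • X j) := by
  classical
  let Q := Lagrange.basis Finset.univ ρ i
  have hX : X i = ∑ n ∈ Finset.range (Q.natDegree + 1), Q.coeff n • ∑ j, ρ j ^ n • X j := calc
    X i = ∑ j, Q.eval (ρ j) • X j := by
      rw [Finset.sum_eq_single i, Lagrange.eval_basis_self hρ.injOn (Finset.mem_univ _), one_smul]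
      · intro j _ hj
        rw [Lagrange.eval_basis_of_ne hj.symm (Finset.mem_univ _), zero_smul]
      · simp
    _ = _ := by
      simp only [Polynomial.eval_eq_sum_range, Finset.sum_smul, Finset.smul_sum, mul_smul]
      exact Finset.sum_comm
  rw [hX]
  exact Submodule.sum_mem _ fun n _ => Submodule.smul_mem _ _ (Submodule.subset_span ⟨n, rfl⟩)

theorem mem_span_fixedPoints_of_finite_orbit {G K F : Type*} [Group G] [Field K] [Field F]
    [Algebra K F] [MulSemiringAction G K] [MulSemiringAction G F] [SMulDistribClass G K F] {θ : K}
    (hθ : (MulAction.orbit G θ).Finite) {x : F} (hx : ∀ g : G, g • θ = θ → g • x = x) :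
    x ∈ Submodule.span K (FixedPoints.subfield G F : Set F) := by
  let O := MulAction.orbit G (θ, x)
  have fst_injOn : O.InjOn Prod.fst := by
    rintro _ ⟨g, rfl⟩ _ ⟨h, rfl⟩ hgh
    refine Prod.ext hgh ?_
    have := hx (h⁻¹ * g) (by rw [mul_smul, inv_smul_eq_iff]; exact hgh)
    rwa [mul_smul, inv_smul_eq_iff] at this
  have : Finite O := by
    refine (Set.Finite.of_finite_image (f := Prod.fst) (hθ.subset ?_) fst_injOn).to_subtype
    rintro _ ⟨_, ⟨g, rfl⟩, rfl⟩
    exact ⟨g, rfl⟩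
  have := Fintype.ofFinite O
  refine Submodule.span_mono ?_ (mem_span_range_sum_pow_smul (ρ := fun ω : O => ω.1.1)
    fst_injOn.injective (fun ω => ω.1.2) ⟨(θ, x), MulAction.mem_orbit_self _⟩)
  rintro _ ⟨n, rfl⟩ g
  simp only [Finset.smul_sum, smul_distrib_smul, smul_pow']
  exact Equiv.sum_comp (MulAction.toPerm g) fun ω : O => ω.1.1 ^ n • ω.1.2

theorem finite_orbit_of_isAlgebraic_adjoin {k K : Type*} [Field k] [Field K] [Algebra k K]
    {S : Set K} {θ : K} (hθ : IsAlgebraic (Algebra.adjoin k S) θ) :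
    (MulAction.orbit (fixingSubgroup (K ≃ₐ[k] K) S) θ).Finite := by
  obtain ⟨p, hp, hpθ⟩ := hθ
  refine (p.rootSet_finite K).subset ?_
  rintro _ ⟨g, rfl⟩
  let σ : K →ₐ[Algebra.adjoin k S] K :=
    { (g.1 : K →+* K) with
      commutes' := fun a => adjoin_le_fixedSubfield S
        (IntermediateField.algebra_adjoin_le_adjoin k S a.2) g }
  have hroot : Polynomial.aeval (σ θ) p = 0 := by
    rw [Polynomial.aeval_algHom_apply, hpθ, map_zero]
  exact Polynomial.mem_rootSet.2 ⟨hp, hroot⟩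

section generation

variable {k K F : Type*} [Field k] [Field K] [Algebra k K] [Field F] [Algebra K F]
  [MulSemiringAction (K ≃ₐ[k] K) F]

theorem fixedSubfield_insert_subset_adjoin [SMulDistribClass (K ≃ₐ[k] K) K F] {θ : K} {S : Set K}
    (hθ : (MulAction.orbit (fixingSubgroup (K ≃ₐ[k] K) S) θ).Finite) :
    (fixedSubfield k F (insert θ S) : Set F) ⊆
      IntermediateField.adjoin K (fixedSubfield k F S : Set F) := by
  intro x hx
  have hspan := mem_span_fixedPoints_of_finite_orbit hθ (x := x) fun g hg =>
    mem_fixedSubfield_iff.1 hx g (Set.forall_mem_insert.2 ⟨hg, fun s hs => g.2 ⟨s, hs⟩⟩)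
  have span_le : Submodule.span K (fixedSubfield k F S : Set F) ≤
      (IntermediateField.adjoin K (fixedSubfield k F S : Set F)).toSubalgebra.toSubmodule :=
    Submodule.span_le.2 (IntermediateField.subset_adjoin K _)
  exact span_le hspan

theorem fixedSubfield_union_subset_adjoin [SMulDistribClass (K ≃ₐ[k] K) K F] {S T : Set K}
    (hT : T.Finite)
    (horbit : ∀ t ∈ T, (MulAction.orbit (fixingSubgroup (K ≃ₐ[k] K) S) t).Finite) :
    (fixedSubfield k F (T ∪ S) : Set F) ⊆
      IntermediateField.adjoin K (fixedSubfield k F S : Set F) := by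
  induction T, hT using Set.Finite.induction_on with
  | empty => exact (Set.empty_union S).symm ▸ IntermediateField.subset_adjoin K _
  | @insert t T _ _ ih =>
    have hle := fixingSubgroup_antitone (K ≃ₐ[k] K) K (Set.subset_union_right (s := T) (t := S))
    have htT : (MulAction.orbit (fixingSubgroup (K ≃ₐ[k] K) (T ∪ S)) t).Finite := by
      refine (horbit t (Set.mem_insert t T)).subset ?_
      rintro _ ⟨g, rfl⟩
      exact ⟨⟨g, hle g.2⟩, rfl⟩
    rw [Set.insert_union]
    exact (fixedSubfield_insert_subset_adjoin htT).trans <| IntermediateField.adjoin_le_iff.2 <|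
      ih fun s hs => horbit s (Set.mem_insert_of_mem t hs)

theorem exists_finite_adjoin_fixedSubfield_eq_top (hfg : (⊤ : IntermediateField K F).FG)
    (hcont : ∀ x : F, ∃ L : IntermediateField k K, L.FG ∧
      ∀ σ : K ≃ₐ[k] K, (∀ y ∈ L, σ y = y) → σ • x = x) :
    ∃ T : Set K, T.Finite ∧ IntermediateField.adjoin K (fixedSubfield k F T : Set F) = ⊤ := by
  obtain ⟨s, hs⟩ := hfg
  have (x : F) : ∃ T : Set K, T.Finite ∧ x ∈ fixedSubfield k F T := by
    obtain ⟨L, hL, hx⟩ := hcont x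
    obtain ⟨T, hT, rfl⟩ := IntermediateField.fg_def.1 hL
    exact ⟨T, hT, mem_fixedSubfield_iff.2 fun σ hσ => hx σ fun y hy =>
      mem_fixedSubfield_iff.1 (adjoin_le_fixedSubfield T hy) σ hσ⟩
  choose T hT hxT using this
  refine ⟨⋃ x ∈ s, T x, s.finite_toSet.biUnion fun x _ => hT x, ?_⟩
  rw [← top_le_iff, ← hs]
  exact IntermediateField.adjoin.mono K _ _ fun x hx =>
    fixedSubfield_mono (Set.subset_biUnion_of_mem hx) (hxT x)

theorem exists_algebraicIndepOn_adjoin_fixedSubfield_eq_top [SMulDistribClass (K ≃ₐ[k] K) K F]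
    {T : Set K} (hT : T.Finite)
    (hgen : IntermediateField.adjoin K (fixedSubfield k F T : Set F) = ⊤) :
    ∃ U : Set K, U.Finite ∧ AlgebraicIndepOn k id U ∧
      IntermediateField.adjoin K (fixedSubfield k F U : Set F) = ⊤ := by
  obtain ⟨U, hU⟩ := (AlgebraicIndependent.matroid k K).exists_isBasis T
  obtain ⟨hind, hUT, halg⟩ := AlgebraicIndependent.matroid_isBasis_iff.1 hU
  refine ⟨U, hT.subset hUT, hind, ?_⟩
  rw [← top_le_iff, ← hgen, IntermediateField.adjoin_le_iff]
  exact .trans (fixedSubfield_mono Set.subset_union_left) <| fixedSubfield_union_subset_adjoin hT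
    fun t ht => finite_orbit_of_isAlgebraic_adjoin (halg t ht)

end generation

section independence

variable {k K : Type*} [Field k] [Field K] [Algebra k K]

theorem infinite_of_isTranscendenceBasis_adjoin
    (htr : ∀ L : IntermediateField k K, L.FG → ∃ x : K, Transcendental L x) {S : Set K}
    (hS : S.Finite) {ι : Type*} {v : ι → K}
    (hv : IsTranscendenceBasis (IntermediateField.adjoin k S) v) : Infinite ι := by
  by_contra hfin
  rw [not_infinite_iff_finite] at hfin
  have halg := hv.isAlgebraic_field
  obtain ⟨x, hx⟩ := htr _ (IntermediateField.fg_adjoin_of_finite (hS.union (Set.finite_range v)))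
  rw [← IntermediateField.adjoin_adjoin_left] at hx
  exact hx (halg.isAlgebraic x)

theorem exists_algebraicIndependent_adjoin
    (htr : ∀ L : IntermediateField k K, L.FG → ∃ x : K, Transcendental L x) {S : Set K}
    (hS : S.Finite) (ι : Type*) [Finite ι] :
    ∃ w : ι → K, AlgebraicIndependent (IntermediateField.adjoin k S) w := by
  obtain ⟨B, hB⟩ := exists_isTranscendenceBasis (IntermediateField.adjoin k S) K
  have := infinite_of_isTranscendenceBasis_adjoin htr hS hB
  obtain ⟨f⟩ := nonempty_embedding_of_infinite ι B
  exact ⟨_, hB.1.comp f f.injective⟩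

theorem algebraicIndependent_sumElim_of_adjoin {S : Set K} {ι κ : Type*} {u : ι → K} {w : κ → K}
    (hu : AlgebraicIndependent k u) (huS : Set.range u ⊆ S)
    (hw : AlgebraicIndependent (IntermediateField.adjoin k S) w) :
    AlgebraicIndependent k (Sum.elim w u) := by
  refine hu.sumElim_of_tower ?_ hw
  exact fun x hx => ⟨⟨x, IntermediateField.subset_adjoin k S (huS hx)⟩, rfl⟩

theorem fixedSubfield_range_inf_fixedSubfield_range_le [IsAlgClosed K] {F : Type*} [Field F]
    [MulSemiringAction (K ≃ₐ[k] K) F]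
    (htr : ∀ L : IntermediateField k K, L.FG → ∃ x : K, Transcendental L x)
    {ι : Type*} [Finite ι] {u v : ι → K} (huv : AlgebraicIndependent k (Sum.elim v u)) :
    fixedSubfield k F (Set.range u) ⊓ fixedSubfield k F (Set.range v) ≤
      FixedPoints.subfield (K ≃ₐ[k] K) F := by
  rintro c ⟨hcu, hcv⟩ g
  obtain ⟨w, hw⟩ := exists_algebraicIndependent_adjoin htr
    ((Set.finite_range u).union (Set.finite_range (g ∘ u))) ι
  have hu : AlgebraicIndependent k u := huv.comp Sum.inr Sum.inr_injective
  have hgu : AlgebraicIndependent k (g ∘ u) := hu.map' (f := (g : K →ₐ[k] K)) g.injective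
  have huw := algebraicIndependent_sumElim_of_adjoin hu Set.subset_union_left hw
  have hguw := algebraicIndependent_sumElim_of_adjoin hgu Set.subset_union_right hw
  have hcw : c ∈ fixedSubfield k F (Set.range w) := by
    obtain ⟨τ, hτ⟩ := exists_algEquiv_of_algebraicIndependent huv huw
    have hτv : ∀ x ∈ Set.range v, τ x ∈ Set.range w :=
      Set.forall_mem_range.2 fun i => ⟨i, (hτ (.inl i)).symm⟩
    rw [← mem_fixedSubfield_iff.1 hcu τ (Set.forall_mem_range.2 fun i => hτ (.inr i))]
    exact smul_mem_fixedSubfield hτv hcv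
  obtain ⟨h, hh⟩ := exists_algEquiv_of_algebraicIndependent huw hguw
  have hhc : h • c = c :=
    mem_fixedSubfield_iff.1 hcw h (Set.forall_mem_range.2 fun i => hh (.inl i))
  have hghc : (g⁻¹ * h) • c = c := mem_fixedSubfield_iff.1 hcu _ <|
    Set.forall_mem_range.2 fun i =>
      (congrArg g.symm (hh (.inr i))).trans (g.symm_apply_apply (u i))
  rwa [mul_smul, hhc, inv_smul_eq_iff, eq_comm] at hghc

end independence

instance isInvariantSubfield_fieldRange_algebraMap {G K F : Type*} [Group G] [Field K] [Field F]
    [Algebra K F] [MulSemiringAction G K] [MulSemiringAction G F] [SMulDistribClass G K F] :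
    IsInvariantSubfield G (algebraMap K F).fieldRange where
  smul_mem := by
    rintro σ _ ⟨c, rfl⟩
    exact ⟨σ • c, algebraMap.smul' σ c F⟩

section semilinear

variable {k K F : Type*} [Field k] [Field K] [Algebra k K] [Field F] [Algebra K F]
  [MulSemiringAction (K ≃ₐ[k] K) F] [SMulDistribClass (K ≃ₐ[k] K) K F]

theorem map_algebraMap_fixedSubfield_le (S : Set K) :
    (fixedSubfield k K S).map (algebraMap K F) ≤ fixedSubfield k F S := by
  rintro _ ⟨c, hc, rfl⟩ σ
  exact (algebraMap.smul' σ c F).symm.trans (congrArg (algebraMap K F) (hc σ))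

theorem fixedSubfield_le_map_algebraMap_sup {S T : Set K} (hTS : T ⊆ S)
    (hT : IntermediateField.adjoin K (fixedSubfield k F T : Set F) = ⊤) :
    fixedSubfield k F S ≤ (fixedSubfield k K S).map (algebraMap K F) ⊔ fixedSubfield k F T := by
  let C := (fixedSubfield k K S).map (algebraMap K F) ⊔ fixedSubfield k F T
  have hC : C ⊔ (algebraMap K F).fieldRange = ⊤ := by
    rw [← top_le_iff, ← IntermediateField.top_toSubfield (F := K), ← hT,
      IntermediateField.adjoin_toSubfield, Subfield.closure_le]
    rintro x (hx | hx)
    · exact le_sup_right (α := Subfield F) hx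
    · exact le_sup_left (α := Subfield F) (le_sup_right (α := Subfield F) hx)
  have inf_le : (algebraMap K F).fieldRange ⊓ fixedSubfield k F S ≤ C := by
    rintro _ ⟨⟨c, rfl⟩, hc⟩
    refine le_sup_left (α := Subfield F) ⟨c, fun σ => (algebraMap K F).injective ?_, rfl⟩
    exact (algebraMap.smul' σ c F).trans (hc σ)
  have := sup_inf_fixedPoints_le C (algebraMap K F).fieldRange
    (sup_le (map_algebraMap_fixedSubfield_le S) (fixedSubfield_mono hTS)) inf_le
  rwa [hC, top_inf_eq] at this

theorem adjoin_fixedSubfield_eq_top_of_mapsTo {S T : Set K} {σ : K ≃ₐ[k] K}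
    (h : ∀ s ∈ S, σ s ∈ T) (hS : IntermediateField.adjoin K (fixedSubfield k F S : Set F) = ⊤) :
    IntermediateField.adjoin K (fixedSubfield k F T : Set F) = ⊤ := by
  have smul_mem (y : F) : σ • y ∈ IntermediateField.adjoin K (fixedSubfield k F T : Set F) := by
    have hy : y ∈ IntermediateField.adjoin K (fixedSubfield k F S : Set F) := hS ▸ trivial
    induction hy using IntermediateField.adjoin_induction with
    | mem y hy => exact IntermediateField.subset_adjoin K _ (smul_mem_fixedSubfield h hy)
    | algebraMap c => exact algebraMap.smul' σ c F ▸ IntermediateField.algebraMap_mem _ _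
    | add y z _ _ hy hz => exact smul_add σ y z ▸ add_mem hy hz
    | inv y _ hy => exact smul_inv'' σ y ▸ inv_mem hy
    | mul y z _ _ hy hz => exact smul_mul' σ y z ▸ mul_mem hy hz
  exact top_le_iff.1 fun y _ => smul_inv_smul σ y ▸ smul_mem (σ⁻¹ • y)

end semilinear

/-! ### Descent to the invariants -/

section descent

open scoped Pointwise

variable {k K F : Type*} [Field k] [Field K] [Algebra k K] [Field F]
  [MulSemiringAction (K ≃ₐ[k] K) F]

variable (k F) in
/-- The subfield of the elements of `F` fixed by the pointwise stabilizer of a finite subset of `B`,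
i.e. the directed union of the subfields `F^S` over the finite subsets `S` of `B`. -/
def finitelySupportedSubfield (B : Set K) : Subfield F :=
  ⨆ S : Finset B, fixedSubfield k F (Subtype.val '' (S : Set B))

theorem mem_finitelySupportedSubfield_iff {B : Set K} {x : F} :
    x ∈ finitelySupportedSubfield k F B ↔
      ∃ S : Finset B, x ∈ fixedSubfield k F (Subtype.val '' (S : Set B)) := by
  have mono : Monotone fun S : Finset B => fixedSubfield k F (Subtype.val '' (S : Set B)) :=
    fun S T hST => fixedSubfield_mono (Set.image_mono (Finset.coe_subset.2 hST))
  exact Subfield.mem_iSup_of_directed mono.directed_le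

variable (k) in
/-- The automorphisms of `K` over `k` that fix `U` pointwise and map `B` onto itself. -/
def fixingStabilizer (U B : Set K) : Subgroup (K ≃ₐ[k] K) :=
  fixingSubgroup (K ≃ₐ[k] K) U ⊓ MulAction.stabilizer (K ≃ₐ[k] K) B

instance isInvariantSubfield_finitelySupportedSubfield (U B : Set K) :
    IsInvariantSubfield (fixingStabilizer k U B) (finitelySupportedSubfield k F B) where
  smul_mem := by
    classical
    rintro ⟨σ, -, hσ⟩ x hx
    have mem_iff (b : K) : σ b ∈ B ↔ b ∈ B := MulAction.mem_stabilizer_set.1 hσ b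
    obtain ⟨S, hx⟩ := mem_finitelySupportedSubfield_iff.1 hx
    refine mem_finitelySupportedSubfield_iff.2
      ⟨S.image fun b : B => ⟨σ b, (mem_iff b).2 b.2⟩, smul_mem_fixedSubfield ?_ hx⟩
    rintro _ ⟨b, hb, rfl⟩
    exact ⟨_, Finset.mem_coe.2 (Finset.mem_image_of_mem _ hb), rfl⟩

theorem exists_mem_fixingStabilizer [IsAlgClosed K] {U B : Set K}
    (hB : IsTranscendenceBasis (IntermediateField.adjoin k U) ((↑) : B → K)) (π : Equiv.Perm B) :
    ∃ σ ∈ fixingStabilizer k U B, ∀ b : B, σ b = π b := by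
  obtain ⟨σ, hσ⟩ := exists_algEquiv_of_isTranscendenceBasis hB hB π
  refine ⟨σ.restrictScalars k, ⟨?_, ?_⟩, hσ⟩
  · rintro ⟨x, hx⟩
    exact σ.commutes ⟨x, IntermediateField.subset_adjoin k U hx⟩
  · refine MulAction.mem_stabilizer_set.2 fun x => ⟨fun hx => ?_, fun hx => ?_⟩
    · have : σ (π.symm ⟨σ x, hx⟩) = σ x := by rw [hσ, Equiv.apply_symm_apply]
      exact σ.injective this ▸ Subtype.coe_prop _
    · exact Set.mem_of_eq_of_mem (hσ ⟨x, hx⟩) (π ⟨x, hx⟩).2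

theorem finitelySupportedSubfield_inf_le [IsAlgClosed K]
    (htr : ∀ L : IntermediateField k K, L.FG → ∃ x : K, Transcendental L x) {U B : Set K}
    [Infinite B] (hB : IsTranscendenceBasis (IntermediateField.adjoin k U) ((↑) : B → K)) :
    finitelySupportedSubfield k F B ⊓ FixedPoints.subfield (fixingStabilizer k U B) F ≤
      FixedPoints.subfield (K ≃ₐ[k] K) F := by
  rintro c ⟨hc, hcfix⟩
  obtain ⟨S, hS⟩ := mem_finitelySupportedSubfield_iff.1 hc
  obtain ⟨π, hπ⟩ := exists_perm_forall_apply_notMem S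
  obtain ⟨σ, hσ, hσπ⟩ := exists_mem_fixingStabilizer hB π
  have range_eq : Set.range (fun s : S => (s : K)) = Subtype.val '' (S : Set B) := by
    ext; simp
  have hcσ : c ∈ fixedSubfield k F (Set.range fun s : S => (π s : K)) := by
    rw [← hcfix ⟨σ, hσ⟩]
    refine smul_mem_fixedSubfield ?_ hS
    rintro _ ⟨s, hs, rfl⟩
    exact ⟨⟨s, hs⟩, (hσπ s).symm⟩
  refine fixedSubfield_range_inf_fixedSubfield_range_le htr ?_ ⟨range_eq ▸ hS, hcσ⟩
  have inj : Function.Injective (Sum.elim (fun s : S => π s) (fun s : S => (s : B))) :=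
    (π.injective.comp Subtype.val_injective).sumElim Subtype.val_injective
      fun s t hst => hπ s s.2 ((congrArg (· ∈ S) hst).mpr t.2)
  have := (hB.1.restrictScalars (algebraMap k _).injective).comp _ inj
  rwa [Sum.comp_elim] at this

variable [Algebra K F] [SMulDistribClass (K ≃ₐ[k] K) K F]

theorem fixedSubfield_le_sup_finitelySupportedSubfield [IsAlgClosed K] {U B : Set K} {S : Finset B}
    (hS : IntermediateField.adjoin K (fixedSubfield k F (Subtype.val '' (S : Set B)) : Set F) = ⊤) :
    fixedSubfield k F U ≤
      (fixedSubfield k K U).map (algebraMap K F) ⊔ finitelySupportedSubfield k F B := by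
  let V : Set K := Subtype.val '' (S : Set B)
  have hV : fixedSubfield k F V ≤ finitelySupportedSubfield k F B :=
    le_iSup (fun S : Finset B => fixedSubfield k F (Subtype.val '' (S : Set B))) S
  calc fixedSubfield k F U
      ≤ fixedSubfield k F (U ∪ V) := fixedSubfield_mono Set.subset_union_left
    _ ≤ (fixedSubfield k K (U ∪ V)).map (algebraMap K F) ⊔ fixedSubfield k F V :=
        fixedSubfield_le_map_algebraMap_sup Set.subset_union_right hS
    _ ≤ ((fixedSubfield k K U).map (algebraMap K F) ⊔ (fixedSubfield k K V).map (algebraMap K F)) ⊔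
          fixedSubfield k F V := by
        rw [← Subfield.map_sup]
        exact sup_le_sup_right ((Subfield.gc_map_comap _).monotone_l
          (fixedSubfield_union_le_sup U V)) _
    _ ≤ _ := sup_le (sup_le le_sup_left
        (((map_algebraMap_fixedSubfield_le V).trans hV).trans le_sup_right))
        (hV.trans le_sup_right)

theorem fixedSubfield_le_fixedPoints_sup [IsAlgClosed K]
    (htr : ∀ L : IntermediateField k K, L.FG → ∃ x : K, Transcendental L x) {U : Set K}
    (hU : U.Finite) (hind : AlgebraicIndepOn k id U)
    (hgen : IntermediateField.adjoin K (fixedSubfield k F U : Set F) = ⊤) :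
    fixedSubfield k F U ≤
      FixedPoints.subfield (K ≃ₐ[k] K) F ⊔ (fixedSubfield k K U).map (algebraMap K F) := by
  obtain ⟨B, hB⟩ := exists_isTranscendenceBasis (IntermediateField.adjoin k U) K
  have := infinite_of_isTranscendenceBasis_adjoin htr hU hB
  have := hU.fintype
  obtain ⟨f⟩ := nonempty_embedding_of_infinite U B
  have hB' : AlgebraicIndependent k ((↑) : B → K) :=
    hB.1.restrictScalars (algebraMap k _).injective
  obtain ⟨σ, hσ⟩ := exists_algEquiv_of_algebraicIndependent hind (hB'.comp f f.injective)
  have hgen' := adjoin_fixedSubfield_eq_top_of_mapsTo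
    (T := Subtype.val '' (Finset.univ.map f : Set B))
    (fun u hu => ⟨f ⟨u, hu⟩, by simp, (hσ ⟨u, hu⟩).symm⟩) hgen
  have fixed_le {x : F} (hx : x ∈ fixedSubfield k F U) :
      x ∈ FixedPoints.subfield (fixingStabilizer k U B) F :=
    fun σ => hx ⟨σ, σ.2.1⟩
  let C := FixedPoints.subfield (K ≃ₐ[k] K) F ⊔ (fixedSubfield k K U).map (algebraMap K F)
  have hC : C ≤ FixedPoints.subfield (fixingStabilizer k U B) F :=
    sup_le (fun x hx σ => hx σ) ((map_algebraMap_fixedSubfield_le U).trans fun _ => fixed_le)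
  have le_sup : fixedSubfield k F U ≤ C ⊔ finitelySupportedSubfield k F B :=
    (fixedSubfield_le_sup_finitelySupportedSubfield hgen').trans (sup_le_sup_right le_sup_right _)
  exact fun x hx => sup_inf_fixedPoints_le C (finitelySupportedSubfield k F B) hC
    ((finitelySupportedSubfield_inf_le htr hB).trans le_sup_left) ⟨le_sup hx, fixed_le hx⟩

end descent

theorem invariants_generate_function_field_general {k K F : Type*} [Field k] [Field K]
    [IsAlgClosed K] [Algebra k K]
    (htr : ∀ L : IntermediateField k K, L.FG → ∃ x : K, Transcendental L x)
    [Field F] [Algebra K F] (hfg : (⊤ : IntermediateField K F).FG)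
    [MulSemiringAction (K ≃ₐ[k] K) F] [SMulDistribClass (K ≃ₐ[k] K) K F]
    (hcont : ∀ x : F, ∃ L : IntermediateField k K, L.FG ∧
      ∀ σ : K ≃ₐ[k] K, (∀ y ∈ L, σ y = y) → σ • x = x) :
    IntermediateField.adjoin K {x : F | ∀ σ : K ≃ₐ[k] K, σ • x = x} = ⊤ := by
  obtain ⟨T, hT, hTgen⟩ := exists_finite_adjoin_fixedSubfield_eq_top hfg hcont
  obtain ⟨U, hU, hind, hUgen⟩ := exists_algebraicIndepOn_adjoin_fixedSubfield_eq_top hT hTgen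
  rw [← top_le_iff, ← hUgen, IntermediateField.adjoin_le_iff]
  refine (fixedSubfield_le_fixedPoints_sup htr hU hind hUgen).trans (sup_le ?_ ?_)
    (c := (IntermediateField.adjoin K _).toSubfield)
  · exact IntermediateField.subset_adjoin K _
  · rintro _ ⟨c, -, rfl⟩
    exact IntermediateField.algebraMap_mem _ c

/-- Invariants generate the function field. -/
theorem invariants_generate_function_field
    (k K : Type) [Field k] [CharZero k] [IsAlgClosed k] [Field K] [IsAlgClosed K] [Algebra k K]
    -- `K` has infinite transcendence degree over `k`
    (htr : ∀ L : IntermediateField k K, L.FG → ∃ x : K, Transcendental L x)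
    (F : Type) [Field F] [Algebra K F]
    -- `F` is finitely generated as a field extension of `K`
    (hfg : ∃ s : Finset F, IntermediateField.adjoin K (s : Set F) = ⊤)
    -- a semilinear action of `Aut(K/k)` on `F`
    (φ : (K ≃ₐ[k] K) →* (F ≃+* F))
    (hsemi : ∀ (σ : K ≃ₐ[k] K) (c : K) (x : F),
      φ σ (algebraMap K F c * x) = algebraMap K F (σ c) * φ σ x)
    -- continuity of the action
    (hcont : ∀ x : F, ∃ L : IntermediateField k K, L.FG ∧
      ∀ σ : K ≃ₐ[k] K, (∀ y ∈ L, σ y = y) → φ σ x = x) :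
    -- the fixed field generates `F` over `K`
    IntermediateField.adjoin K {x : F | ∀ σ : K ≃ₐ[k] K, φ σ x = x} = ⊤ := by
  let := MulSemiringAction.compHom F φ
  have : SMulDistribClass (K ≃ₐ[k] K) K F :=
    ⟨fun σ c x => by rw [Algebra.smul_def, Algebra.smul_def]; exact hsemi σ c x⟩
  exact invariants_generate_function_field_general htr hfg hcont
end

section
/- A continuous descent datum is effective over a finitely generated subfield: Let k be a field of characteristic zero and K an algebraically closed field extension of k of infinite transcendence degree over k. Let Y be an integral scheme that is quasi-projective over K, equipped with a continuous descent datum with respect to K/k. Then there exist an intermediate field L of K/k, finitely generated over k, a quasi-projective scheme Y' over L, and an isomorphism Y ≅ Y' ×_{Spec L} Spec K of schemes over K under which, for every σ ∈ Aut(K/k) fixing L pointwise, the action of σ on Y corresponds to the automorphism id_{Y'} × Spec(σ⁻¹) of Y' ×_{Spec L} Spec K. -/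
open AlgebraicGeometry CategoryTheory CategoryTheory.Limits

noncomputable section

namespace Paper

attribute [local instance] MvPolynomial.gradedAlgebra

/-- Projective `n`-space over a ring `K`, as `Proj` of the polynomial ring in `n + 1`
variables with its grading by total degree. -/
def ProjSpace (K : Type) [CommRing K] (n : ℕ) : Scheme :=
  Proj (MvPolynomial.homogeneousSubmodule (Fin (n + 1)) K)

/-- The structure morphism `ℙⁿ_K ⟶ Spec K`. -/
def ProjSpace.structMap (K : Type) [CommRing K] (n : ℕ) :
    ProjSpace K n ⟶ Spec (CommRingCat.of K) :=
  Proj.toSpecZero _ ≫ Spec.map (CommRingCat.ofHom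
    (algebraMap K (MvPolynomial.homogeneousSubmodule (Fin (n + 1)) K 0)))

/-- A scheme `Y` with structure morphism `p : Y ⟶ Spec K` is quasi-projective over `K` if
for some `n` there is an immersion (locally closed immersion) `Y ⟶ ℙⁿ_K` over `K`. -/
def QuasiProjectiveOver (K : Type) [CommRing K] {Y : Scheme}
    (p : Y ⟶ Spec (CommRingCat.of K)) : Prop :=
  ∃ (n : ℕ) (f : Y ⟶ ProjSpace K n), IsImmersion f ∧ f ≫ ProjSpace.structMap K n = p

/-- A scheme `Y` with structure morphism `p : Y ⟶ Spec K` is quasi-affine over `K` if it is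
of finite type over `K` and admits an open immersion over `K` into an affine `K`-scheme. -/
def QuasiAffineOver (K : Type) [CommRing K] {Y : Scheme}
    (p : Y ⟶ Spec (CommRingCat.of K)) : Prop :=
  LocallyOfFiniteType p ∧ QuasiCompact p ∧
    ∃ (Z : Scheme) (q : Z ⟶ Spec (CommRingCat.of K)) (j : Y ⟶ Z),
      IsAffine Z ∧ IsOpenImmersion j ∧ j ≫ q = p

variable (k K : Type) [Field k] [Field K] [Algebra k K]

/-- The automorphism `Spec (σ⁻¹)` of `Spec K` attached to `σ ∈ Aut(K/k)`. -/
def specAut (σ : K ≃ₐ[k] K) : Spec (CommRingCat.of K) ⟶ Spec (CommRingCat.of K) :=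
  Spec.map (CommRingCat.ofHom ((σ⁻¹ : K ≃ₐ[k] K) : K →+* K))

/-- A descent datum on the `K`-scheme `(Y, p)` with respect to `K/k`: an action of
`Aut(K/k)` on `Y` by scheme isomorphisms lifting the natural action on `Spec K`. -/
structure DescentDatum (Y : Scheme) (p : Y ⟶ Spec (CommRingCat.of K)) where
  act : (K ≃ₐ[k] K) →* Aut Y
  compat : ∀ σ : K ≃ₐ[k] K, (act σ).hom ≫ p = p ≫ specAut k K σ

lemma specAut_comp (σ : K ≃ₐ[k] K) :
    specAut k K σ ≫ Spec.map (CommRingCat.ofHom (algebraMap k K)) =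
      Spec.map (CommRingCat.ofHom (algebraMap k K)) := by
  rw [specAut, ← Spec.map_comp]
  congr 1
  ext x
  exact (σ⁻¹ : K ≃ₐ[k] K).commutes x

/-- The base change to `K` of a scheme `X` over `k`. -/
def baseChange {X : Scheme} (q : X ⟶ Spec (CommRingCat.of k)) : Scheme :=
  pullback q (Spec.map (CommRingCat.ofHom (algebraMap k K)))

/-- The automorphism `id_X × Spec (σ⁻¹)` of the base change `X ×_{Spec k} Spec K`. -/
def baseChangeAut {X : Scheme} (q : X ⟶ Spec (CommRingCat.of k)) (σ : K ≃ₐ[k] K) :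
    baseChange k K q ⟶ baseChange k K q :=
  pullback.map _ _ _ _ (𝟙 X) (specAut k K σ) (𝟙 (Spec (CommRingCat.of k)))
    (by simp) (by rw [Category.comp_id, specAut_comp])

/-- A scheme isomorphism fixes the generic point of an irreducible scheme. -/
lemma aut_base_genericPoint {Y : Scheme} [IrreducibleSpace Y] (e : Y ≅ Y) :
    e.hom.base (genericPoint Y) = genericPoint Y := by
  let h : Y ≃ₜ Y := TopCat.homeoOfIso (Scheme.forgetToTop.mapIso e)
  have hg : IsGenericPoint (h (genericPoint Y)) (⊤ : Set Y) := by
    rw [IsGenericPoint, ← Set.image_singleton, ← h.image_closure,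
      (genericPoint_spec Y).def, Set.top_eq_univ, Set.image_univ, h.surjective.range_eq]
  exact hg.eq (genericPoint_spec Y)

variable {k K}

/-- The action of `σ ∈ Aut(K/k)` on the function field of `Y`, given by pullback of rational
functions along the action of `σ⁻¹` on `Y`. -/
def DescentDatum.ffAction {Y : Scheme} [IrreducibleSpace Y] {p : Y ⟶ Spec (CommRingCat.of K)}
    (D : DescentDatum k K Y p) (σ : K ≃ₐ[k] K) :
    Y.functionField ⟶ Y.functionField :=
  eqToHom (congrArg Y.presheaf.stalk (aut_base_genericPoint ((D.act σ⁻¹ : Aut Y) : Y ≅ Y)).symm) ≫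
    (D.act σ⁻¹ : Aut Y).hom.stalkMap (genericPoint Y)

/-- Continuity of a descent datum on an irreducible scheme: every rational function
(i.e. element of the function field) is defined over a subfield of `K` that is finitely
generated over `k`. -/
def DescentDatum.IsContinuous {Y : Scheme} [IrreducibleSpace Y]
    {p : Y ⟶ Spec (CommRingCat.of K)} (D : DescentDatum k K Y p) : Prop :=
  ∀ f : Y.functionField, ∃ L : IntermediateField k K, L.FG ∧
    ∀ σ : K ≃ₐ[k] K, (∀ x ∈ L, σ x = x) → D.ffAction σ f = f


variable (k K)

lemma specAut_comp_val (L : IntermediateField k K) (σ : K ≃ₐ[k] K)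
    (hσ : ∀ x ∈ L, σ x = x) :
    specAut k K σ ≫ Spec.map (CommRingCat.ofHom (algebraMap (↥L) K)) =
      Spec.map (CommRingCat.ofHom (algebraMap (↥L) K)) := by
  rw [specAut, ← Spec.map_comp]
  congr 1
  ext x
  show (σ⁻¹ : K ≃ₐ[k] K) (algebraMap (↥L) K x) = algebraMap (↥L) K x
  exact (AlgEquiv.symm_apply_eq σ).mpr (hσ (algebraMap (↥L) K x) x.2).symm

/-!
Fix an immersion `f : Y ⟶ ℙⁿ_K`. The ideal sheaf of its scheme-theoretic image, and that of the
reduced complement of the open set in which `Y` is closed, are generated on the standard charts by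
finitely many polynomials in the `x_j / x_i`. Adjoining their coefficients to `k` gives a finitely
generated field such that, for every larger `L`, both ideal sheaves, and with them the locally
closed subscheme `Y`, descend to `ℙⁿ_L`.

It remains to enlarge `L` so that the composite `Y ⟶ ℙⁿ_K ⟶ ℙⁿ_L` is invariant under every `σ`
fixing `L`. As `Y` is integral and `ℙⁿ_L` is separated, it suffices to check this at the generic
point, which lies in some chart `x_i ≠ 0`. There the composite is a ring homomorphism
`L[x_j / x_i : j] → K(Y)`, and it is invariant as soon as `σ` fixes `L` and the images of the
coordinates; by continuity each of these `n + 1` rational functions is fixed once `L` contains a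
suitable finitely generated field.
-/

section ChartRing

open MvPolynomial HomogeneousLocalization

universe u v w

lemma eval₂_mul_of_isHomogeneous {R : Type u} {S : Type w} [CommSemiring R] [CommSemiring S]
    {σ : Type v} (φ : R →+* S) (a : σ → S) (t : S) {h : MvPolynomial σ R} {m : ℕ}
    (hh : h.IsHomogeneous m) :
    h.eval₂ φ (fun j ↦ a j * t) = h.eval₂ φ a * t ^ m := by
  rw [eval₂_eq, eval₂_eq, Finset.sum_mul]
  refine Finset.sum_congr rfl fun d hd ↦ ?_
  have hdeg : ∑ j ∈ d.support, d j = m := by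
    simpa [Finsupp.weight_apply, Finsupp.sum] using hh (mem_support_iff.mp hd)
  simp only [mul_pow, Finset.prod_mul_distrib, Finset.prod_pow_eq_pow_sum, hdeg, mul_assoc]

/-- Extension of scalars `R[x_j : j] → S[x_j : j]` as a homomorphism of graded rings. -/
def gradedMap (R : Type u) (S : Type w) [CommRing R] [CommRing S] [Algebra R S] (σ : Type v) :
    homogeneousSubmodule σ R →+*ᵍ homogeneousSubmodule σ S where
  __ := MvPolynomial.map (algebraMap R S)
  map_mem h := IsHomogeneous.map h _

lemma gradedMap_apply {R : Type u} (S : Type w) [CommRing R] [CommRing S] [Algebra R S]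
    {σ : Type v} (h : MvPolynomial σ R) :
    gradedMap R S σ h = MvPolynomial.map (algebraMap R S) h := rfl

lemma powers_le_comap_powers {M N F : Type*} [Monoid M] [Monoid N] [FunLike F M N]
    [MonoidHomClass F M N] {φ : F} {a : M} {b : N} (hab : φ a = b) :
    Submonoid.powers a ≤ (Submonoid.powers b).comap φ := by
  simp [Submonoid.powers_le, hab, Submonoid.mem_powers]

variable (R : Type u) [CommRing R] {σ : Type v}

lemma X_mem_homogeneousSubmodule_one (i : σ) :
    (X i : MvPolynomial σ R) ∈ homogeneousSubmodule σ R 1 :=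
  isHomogeneous_X R i

/-- The ring `R[x_j / x_i : j]` of functions on the standard chart `x_i ≠ 0` of projective space,
encoded as the degree-zero part of `R[x_j : j]` with `x_i` inverted so as to match Mathlib's
charts of `Proj`. -/
abbrev ChartRing (i : σ) : Type (max u v) :=
  Away (homogeneousSubmodule σ R) (X i : MvPolynomial σ R)

namespace ChartRing

/-- The inclusion of the constants into the chart ring. It is spelled so that it is, up to
unfolding, the one through which `ProjSpace.structMap` is defined. -/
def C (i : σ) : R →+* ChartRing R i :=
  (fromZeroRingHom (homogeneousSubmodule σ R) _).comp (algebraMap R _)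

/-- The coordinate function `x_j / x_i` on the chart `x_i ≠ 0`. -/
def coord (i j : σ) : ChartRing R i :=
  Away.mk _ (X_mem_homogeneousSubmodule_one R i) 1 (X j) (X_mem_homogeneousSubmodule_one R j)

variable {R}

lemma val_C (i : σ) (r : R) :
    (C R i r).val = algebraMap (MvPolynomial σ R) _ (MvPolynomial.C r) := by
  rw [← Localization.mk_one_eq_algebraMap]
  rfl

lemma val_mk_mul_X_pow {i : σ} {m : ℕ} {h : MvPolynomial σ R}
    (hh : h ∈ homogeneousSubmodule σ R (m • 1)) :
    (Away.mk _ (X_mem_homogeneousSubmodule_one R i) m h hh).val *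
      algebraMap (MvPolynomial σ R) _ (X i) ^ m = algebraMap (MvPolynomial σ R) _ h := by
  rw [Away.val_mk, Localization.mk_eq_mk', ← map_pow]
  exact IsLocalization.mk'_spec _ _ _

lemma val_coord_mul_X (i j : σ) :
    (coord R i j).val * algebraMap (MvPolynomial σ R) _ (X i) =
      algebraMap (MvPolynomial σ R) _ (X j) := by
  simpa only [coord, pow_one] using
    val_mk_mul_X_pow (i := i) (m := 1) (X_mem_homogeneousSubmodule_one R j)

lemma coord_self (i : σ) : coord R i i = 1 := by
  apply val_injective
  rw [coord, Away.val_mk, val_one]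
  simp

lemma mk_eq_eval₂ {i : σ} {m : ℕ} {h : MvPolynomial σ R}
    (hh : h ∈ homogeneousSubmodule σ R (m • 1)) :
    Away.mk _ (X_mem_homogeneousSubmodule_one R i) m h hh = h.eval₂ (C R i) (coord R i) := by
  apply val_injective
  let val' := algebraMap (ChartRing R i) (Localization.Away (X i : MvPolynomial σ R))
  let loc := algebraMap (MvPolynomial σ R) (Localization.Away (X i : MvPolynomial σ R))
  have hX : IsUnit (loc (X i)) := IsLocalization.Away.algebraMap_isUnit _
  refine (hX.pow m).mul_left_injective ?_
  have hC : val'.comp (C R i) = loc.comp MvPolynomial.C := RingHom.ext (val_C i)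
  have hcoord : (fun j ↦ val' (coord R i j) * loc (X i)) = fun j ↦ loc (X j) :=
    funext (val_coord_mul_X i)
  calc  _ = loc h := val_mk_mul_X_pow hh
    _ = h.eval₂ (loc.comp MvPolynomial.C) (fun j ↦ val' (coord R i j) * loc (X i)) := by
        rw [hcoord]
        simpa using hom_eval₂ h MvPolynomial.C loc X
    _ = _ := by
        rw [eval₂_mul_of_isHomogeneous _ _ _ (by simpa using hh), ← hC, ← hom_eval₂]
        rfl

lemma eval₂Hom_surjective (i : σ) : Function.Surjective (eval₂Hom (C R i) (coord R i)) := by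
  intro x
  obtain ⟨m, h, hh, rfl⟩ := Away.mk_surjective _ (X_mem_homogeneousSubmodule_one R i) x
  exact ⟨h, (mk_eq_eval₂ hh).symm⟩

lemma ringHom_ext {F : Type w} [Semiring F] {i : σ} {u v : ChartRing R i →+* F}
    (hC : u.comp (C R i) = v.comp (C R i)) (hcoord : ∀ j, u (coord R i j) = v (coord R i j)) :
    u = v := by
  rw [← RingHom.cancel_right (eval₂Hom_surjective i)]
  exact MvPolynomial.ringHom_ext (by simpa using DFunLike.congr_fun hC) (by simpa using hcoord)

/-- The universal property of the chart ring: it is freely generated over `R` by the coordinates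
`x_j / x_i`, subject only to `x_i / x_i = 1`. -/
def lift {F : Type w} [CommRing F] {i : σ} (u : R →+* F) (a : σ → F) (ha : a i = 1) :
    ChartRing R i →+* F :=
  (IsLocalization.Away.lift (S := Localization.Away (X i : MvPolynomial σ R)) (X i)
    (g := eval₂Hom u a) (by simp [ha])).comp
    (algebraMap (ChartRing R i) (Localization.Away (X i : MvPolynomial σ R)))

section Lift

variable {F : Type w} [CommRing F] {i : σ} (u : R →+* F) (a : σ → F) (ha : a i = 1)

lemma lift_C (r : R) : lift u a ha (C R i r) = u r := by
  simp [lift, HomogeneousLocalization.algebraMap_apply, val_C]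

lemma lift_coord (j : σ) : lift u a ha (coord R i j) = a j := by
  have h := congrArg (IsLocalization.Away.lift (S := Localization.Away (X i : MvPolynomial σ R))
    (X i) (g := eval₂Hom u a) (by simp [ha])) (val_coord_mul_X i j)
  simpa [lift, ha, HomogeneousLocalization.algebraMap_apply] using h

end Lift

section Map

variable (R) (S : Type w) [CommRing S] [Algebra R S]

/-- Extension of scalars on the chart rings. -/
def map (i : σ) : ChartRing R i →+* ChartRing S i :=
  HomogeneousLocalization.map (gradedMap R S σ) (powers_le_comap_powers (map_X _ i))

lemma map_comp_C (i : σ) : (map R S i).comp (C R i) = (C S i).comp (algebraMap R S) := by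
  ext1 r
  rw [RingHom.comp_apply, RingHom.comp_apply, HomogeneousLocalization.ext_iff_val, val_C]
  change Localization.mk (MvPolynomial.map (algebraMap R S) (MvPolynomial.C r))
    ⟨MvPolynomial.map (algebraMap R S) 1, _⟩ = _
  simp only [MvPolynomial.map_C, map_one, ← Localization.mk_one_eq_algebraMap]
  rfl

lemma map_coord (i j : σ) : map R S i (coord R i j) = coord S i j := by
  apply val_injective
  simp [map, coord, Away.mk, HomogeneousLocalization.map_mk, gradedMap_apply]

end Map

lemma isPushout_map (R S : Type u) [CommRing R] [CommRing S] [Algebra R S] {σ : Type u} (i : σ) :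
    IsPushout (CommRingCat.ofHom (algebraMap R S)) (CommRingCat.ofHom (C R i))
      (CommRingCat.ofHom (C S i)) (CommRingCat.ofHom (map R S i)) := by
  refine ⟨⟨congr(CommRingCat.ofHom $(map_comp_C R S i)).symm⟩, ⟨PushoutCocone.IsColimit.mk _
    (fun s ↦ CommRingCat.ofHom (lift s.inl.hom (fun j ↦ s.inr.hom (coord R i j))
      (by rw [coord_self, map_one]))) (fun s ↦ ?_) (fun s ↦ ?_) fun s m hl hr ↦ ?_⟩⟩
  · ext r
    simp [lift_C]
  · ext1
    refine ringHom_ext ?_ fun j ↦ ?_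
    · ext r
      have hs : s.inl.hom (algebraMap R S r) = s.inr.hom (C R i r) := congr($(s.condition).hom r)
      have hmap : map R S i (C R i r) = C S i (algebraMap R S r) := congr($(map_comp_C R S i) r)
      simp [hmap, lift_C, hs]
    · simp [map_coord, lift_coord]
  · ext1
    refine ringHom_ext ?_ fun j ↦ ?_
    · ext r
      simp [lift_C, ← hl]
    · simp [lift_coord, ← hr, map_coord]

end ChartRing

end ChartRing

namespace ProjSpace

open MvPolynomial

lemma irrelevant_le_span_X (R : Type*) [CommRing R] (σ : Type*) :
    (HomogeneousIdeal.irrelevant (homogeneousSubmodule σ R)).toIdeal ≤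
      Ideal.span (Set.range (X : σ → MvPolynomial σ R)) := by
  refine (HomogeneousIdeal.toIdeal_irrelevant_le _).mpr fun d hd h hh ↦ ?_
  change h ∈ Ideal.span _
  rw [← Set.image_univ, mem_ideal_span_X_image]
  intro m hm
  have hdeg : m.degree = d := by
    rw [Finsupp.degree_eq_weight_one]
    exact hh (mem_support_iff.mp hm)
  by_contra! hm0
  obtain rfl : m = 0 := by ext j; simpa using hm0 j
  simp at hdeg
  omega

lemma irrelevant_le_map_gradedMap (R S : Type*) [CommRing R] [CommRing S] [Algebra R S]
    (σ : Type*) :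
    HomogeneousIdeal.irrelevant (homogeneousSubmodule σ S) ≤
      (HomogeneousIdeal.irrelevant (homogeneousSubmodule σ R)).map (gradedMap R S σ) := by
  refine (irrelevant_le_span_X S σ).trans (Ideal.span_le.mpr ?_)
  rintro _ ⟨i, rfl⟩
  rw [← map_X (algebraMap R S) i]
  exact Ideal.mem_map_of_mem (gradedMap R S σ)
    (HomogeneousIdeal.mem_irrelevant_of_mem _ one_pos (X_mem_homogeneousSubmodule_one R i))

section Chart

variable (R : Type) [CommRing R] {n : ℕ}

/-- The standard affine chart `x_i ≠ 0` of `ℙⁿ_R`. -/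
def chart (i : Fin (n + 1)) : Spec (CommRingCat.of (ChartRing R i)) ⟶ ProjSpace R n :=
  Proj.awayι _ (X i) (X_mem_homogeneousSubmodule_one R i) one_pos

instance (i : Fin (n + 1)) : IsOpenImmersion (chart R i) :=
  inferInstanceAs (IsOpenImmersion (Proj.awayι _ _ _ _))

instance : (ProjSpace R n).IsSeparated :=
  inferInstanceAs (Proj _).IsSeparated

variable (n) in
/-- The cover of `ℙⁿ_R` by its `n + 1` standard affine charts. -/
def affineOpenCover : (ProjSpace R n).AffineOpenCover :=
  Proj.affineOpenCoverOfIrrelevantLESpan (homogeneousSubmodule (Fin (n + 1)) R) X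
    (X_mem_homogeneousSubmodule_one R) (fun _ ↦ one_pos) (irrelevant_le_span_X R _)

/-- The open subset `x_i ≠ 0` of `ℙⁿ_R`. -/
def basicOpen (i : Fin (n + 1)) : (ProjSpace R n).Opens :=
  Proj.basicOpen (homogeneousSubmodule (Fin (n + 1)) R) (X i)

lemma opensRange_chart (i : Fin (n + 1)) : (chart R i).opensRange = basicOpen R i :=
  Proj.opensRange_awayι _ _ _ _

lemma isAffineOpen_basicOpen (i : Fin (n + 1)) : IsAffineOpen (basicOpen R i) :=
  Proj.isAffineOpen_basicOpen _ _ (X_mem_homogeneousSubmodule_one R i) one_pos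

variable (n) in
lemma iSup_basicOpen : ⨆ i : Fin (n + 1), basicOpen R i = ⊤ :=
  Proj.iSup_basicOpen_eq_top _ _ (irrelevant_le_span_X R _)

lemma chart_structMap (i : Fin (n + 1)) :
    chart R i ≫ structMap R n = Spec.map (CommRingCat.ofHom (ChartRing.C R i)) := by
  refine (Proj.awayι_toSpecZero_assoc _ _ _ _ _).trans ?_
  rw [← Spec.map_comp]
  rfl

/-- A degree-zero fraction with denominator a power of `x_i`, as a function on `x_i ≠ 0`. -/
def toSection (i : Fin (n + 1)) : ChartRing R i →+* Γ(ProjSpace R n, basicOpen R i) :=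
  (Proj.awayToSection (homogeneousSubmodule (Fin (n + 1)) R) (X i)).hom

lemma toSection_surjective (i : Fin (n + 1)) : Function.Surjective (toSection R i) := fun t ↦
  let e := Proj.basicOpenIsoAway (homogeneousSubmodule (Fin (n + 1)) R) (X i)
    (X_mem_homogeneousSubmodule_one R i) one_pos
  ⟨e.inv.hom t, e.inv_hom_id_apply t⟩

instance [IsNoetherianRing R] : IsNoetherian (ProjSpace R n) := by
  refine (isNoetherian_iff_of_finite_iSup_eq_top
    (S := fun i ↦ ⟨basicOpen R i, isAffineOpen_basicOpen R i⟩) (iSup_basicOpen R n)).mpr fun i ↦ ?_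
  exact isNoetherianRing_of_surjective _ _ ((toSection R i).comp (eval₂Hom _ _))
    ((toSection_surjective R i).comp (ChartRing.eval₂Hom_surjective i))

end Chart

section GradedRingHom

universe u

variable {A B τ υ : Type u} [CommRing A] [SetLike τ A] [AddSubgroupClass τ A]
  [CommRing B] [SetLike υ B] [AddSubgroupClass υ B] {𝒜 : ℕ → τ} {ℬ : ℕ → υ}
  [GradedRing 𝒜] [GradedRing ℬ] (φ : 𝒜 →+*ᵍ ℬ)
  (hφ : HomogeneousIdeal.irrelevant ℬ ≤ (HomogeneousIdeal.irrelevant 𝒜).map φ)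
  {a : A} {b : B}

lemma awayι_comp_map_of_eq (hab : φ a = b) {d : ℕ} (ha : a ∈ 𝒜 d) (hb : b ∈ ℬ d) (hd : 0 < d) :
    Proj.awayι ℬ b hb hd ≫ Proj.map φ hφ =
      Spec.map (CommRingCat.ofHom (HomogeneousLocalization.map φ (powers_le_comap_powers hab))) ≫
        Proj.awayι 𝒜 a ha hd := by
  subst hab
  exact Proj.awayι_comp_map φ hφ hd a ha

lemma awayToSection_comp_appLE_of_eq (hab : φ a = b) {d : ℕ} (ha : a ∈ 𝒜 d)
    (h : Proj.basicOpen ℬ b ≤ Proj.map φ hφ ⁻¹ᵁ Proj.basicOpen 𝒜 a) :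
    Proj.awayToSection 𝒜 a ≫ (Proj.map φ hφ).appLE (Proj.basicOpen 𝒜 a) (Proj.basicOpen ℬ b) h =
      CommRingCat.ofHom (HomogeneousLocalization.map φ (powers_le_comap_powers hab)) ≫
        Proj.awayToSection ℬ b := by
  subst hab
  exact Proj.awayToSection_comp_appLE φ hφ ha

end GradedRingHom

section Map

variable (R S : Type) [CommRing R] [CommRing S] [Algebra R S] (n : ℕ)

/-- The morphism `ℙⁿ_S ⟶ ℙⁿ_R` induced by extension of scalars. -/
def map : ProjSpace S n ⟶ ProjSpace R n :=
  Proj.map (gradedMap R S (Fin (n + 1))) (irrelevant_le_map_gradedMap R S _)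

variable {n}

lemma chart_map (i : Fin (n + 1)) :
    chart S i ≫ map R S n = Spec.map (CommRingCat.ofHom (ChartRing.map R S i)) ≫ chart R i :=
  awayι_comp_map_of_eq _ _ (map_X _ i) _ _ _

lemma map_preimage_basicOpen (i : Fin (n + 1)) :
    map R S n ⁻¹ᵁ basicOpen R i = basicOpen S i := by
  rw [basicOpen, basicOpen, ← map_X (algebraMap R S) i]
  rfl

lemma appLE_toSection (i : Fin (n + 1)) (x : ChartRing R i) :
    ((map R S n).appLE (basicOpen R i) (basicOpen S i) (map_preimage_basicOpen R S i).ge).hom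
      (toSection R i x) = toSection S i (ChartRing.map R S i x) :=
  congr($(awayToSection_comp_appLE_of_eq _ (irrelevant_le_map_gradedMap R S _) (map_X _ i)
    (X_mem_homogeneousSubmodule_one R i) (map_preimage_basicOpen R S i).ge).hom x)

variable (n) in
lemma isPullback_map :
    IsPullback (map R S n) (structMap S n) (structMap R n)
      (Spec.map (CommRingCat.ofHom (algebraMap R S))) := by
  refine Scheme.isPullback_of_openCover _ _ _ _ (affineOpenCover R n).openCover
    fun (i : Fin (n + 1)) ↦ ?_
  have hchart : IsPullback (chart S i) (Spec.map (CommRingCat.ofHom (ChartRing.map R S i)))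
      (map R S n) (chart R i) :=
    (IsOpenImmersion.isPullback _ _ _ _ (chart_map R S i)
      (by rw [opensRange_chart, opensRange_chart, map_preimage_basicOpen])).flip
  have hring := (isPullback_SpecMap_of_isPushout _ _ _ _ (ChartRing.isPushout_map R S i)).flip
  refine hring.of_iso hchart.isoPullback (Iso.refl _) (Iso.refl _) (Iso.refl _) ?_ ?_ ?_ ?_
  · simp only [Iso.refl_hom]
    exact hchart.isoPullback_hom_snd.symm
  · simp only [Iso.refl_hom, Category.comp_id, ← chart_structMap]
    exact (hchart.isoPullback_hom_fst_assoc _).symm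
  · simp only [Iso.refl_hom, Category.comp_id, ← chart_structMap]
    rfl
  · simp

instance : IsAffineHom (map R S n) :=
  MorphismProperty.of_isPullback (P := @IsAffineHom) (isPullback_map R S n).flip inferInstance

end Map

end ProjSpace

section Descent

open Scheme

lemma span_le_map_comap_span {A B : Type*} [CommSemiring A] [CommSemiring B] {φ : A →+* B}
    {T : Set B} (hT : T ⊆ Set.range φ) :
    Ideal.span T ≤ ((Ideal.span T).comap φ).map φ := by
  refine Ideal.span_le.mpr fun t ht ↦ ?_
  obtain ⟨s, rfl⟩ := hT ht
  exact Ideal.mem_map_of_mem φ (Ideal.subset_span ht)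

lemma comap_map_eq_of_ideal_le {P Q : Scheme} (π : P ⟶ Q) [IsAffineHom π] (J : P.IdealSheafData)
    {ι : Type*} (U : ι → P.affineOpens) (V : ι → Q.affineOpens) (hV : ⨆ i, (V i).1 = ⊤)
    (hUV : ∀ i, π ⁻¹ᵁ (V i).1 = U i)
    (hJ : ∀ i, J.ideal (U i) ≤ ((J.ideal (U i)).comap (π.appLE (V i) (U i) (hUV i).ge).hom).map
      (π.appLE (V i) (U i) (hUV i).ge).hom) :
    (J.map π).comap π = J := by
  obtain rfl : U = fun i ↦ ⟨π ⁻¹ᵁ (V i).1, (V i).2.preimage π⟩ :=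
    funext fun i ↦ Subtype.ext (hUV i).symm
  simp only [Hom.appLE_eq_app] at hJ
  refine le_antisymm (IdealSheafData.comap_map_le _ _) (IdealSheafData.le_of_iSup_eq_top
    (fun i ↦ ⟨π ⁻¹ᵁ (V i).1, (V i).2.preimage π⟩) ?_ fun i ↦ (hJ i).trans ?_)
  · rw [← Hom.preimage_iSup, hV, Hom.preimage_top]
  · rw [Ideal.map_le_iff_le_comap, ← IdealSheafData.ideal_map_of_isAffineHom,
      ← IdealSheafData.ideal_map_of_isAffineHom]
    exact IdealSheafData.le_map_comap (f := π) (J.map π) (V i)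

lemma exists_preimage_eq_of_comap_map_vanishingIdeal {P Q : Scheme} (π : P ⟶ Q)
    (U : P.Opens) (hU : ((IdealSheafData.vanishingIdeal U.compl).map π).comap π =
      IdealSheafData.vanishingIdeal U.compl) :
    ∃ V : Q.Opens, π ⁻¹ᵁ V = U := by
  refine ⟨((IdealSheafData.vanishingIdeal U.compl).map π).support.compl, ?_⟩
  have hsupp : π ⁻¹' ((IdealSheafData.vanishingIdeal U.compl).map π).support = (U : Set P)ᶜ := by
    simpa using congr((($hU).support : Set P))
  ext1
  simpa using congr($hsuppᶜ)

lemma exists_isPullback_of_isImmersion {P Q Y : Scheme} (π : P ⟶ Q) [IsAffineHom π] (f : Y ⟶ P)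
    [IsImmersion f] [QuasiCompact f] (V : Q.Opens) (hV : π ⁻¹ᵁ V = f.coborderRange)
    (hker : (f.ker.map π).comap π = f.ker) :
    ∃ (Y' : Scheme) (f' : Y' ⟶ Q) (g : Y ⟶ Y'), IsImmersion f' ∧ IsPullback g f f' π := by
  have hclosed : IsPullback (f.ker.subschemeMap (f.ker.map π) π le_rfl) f.ker.subschemeι
      (f.ker.map π).subschemeι π := by
    refine (isPullback_of_isClosedImmersion _ _ _ _ (by simp) ?_).flip
    rw [IdealSheafData.ker_subschemeι, IdealSheafData.ker_subschemeι, hker]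
  have hopen : IsPullback (π.resLE V f.coborderRange hV.ge) f.coborderRange.ι V.ι π :=
    IsOpenImmersion.isPullback _ _ _ _ (by simp) (by simp [hV])
  have hY := (IsImmersion.isPullback_toImage_liftCoborder f).flip.paste_horiz hopen
  rw [← f.ker.subschemeMap_subschemeι _ π le_rfl] at hY
  have h := (hY.of_right' (IsPullback.of_hasPullback (f.ker.map π).subschemeι V.ι).flip).paste_vert
    hclosed
  rw [f.toImage_imageι] at h
  exact ⟨_, _, _, inferInstance, h⟩

end Descent

section FieldOfDefinition

open MvPolynomial Scheme

lemma ChartRing.exists_fg_forall_mem_range_map (F : Type*) {E : Type*} [Field F] [Field E]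
    [Algebra F E] {σ : Type*} {i : σ} (x : ChartRing E i) :
    ∃ L₀ : IntermediateField F E, L₀.FG ∧
      ∀ L : IntermediateField F E, L₀ ≤ L → x ∈ (ChartRing.map L E i).range := by
  obtain ⟨h, rfl⟩ := ChartRing.eval₂Hom_surjective i x
  refine ⟨IntermediateField.adjoin F h.coeffs, IntermediateField.fg_adjoin_finset _,
    fun L hL ↦ ?_⟩
  obtain ⟨h, rfl⟩ : h ∈ Set.range (MvPolynomial.map (algebraMap L E)) :=
    mem_range_map_iff_coeffs_subset.mpr fun c hc ↦
      ⟨⟨c, hL (IntermediateField.subset_adjoin _ _ hc)⟩, rfl⟩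
  refine ⟨h.eval₂ (ChartRing.C L i) (ChartRing.coord L i), ?_⟩
  simp [hom_eval₂, ChartRing.map_comp_C, ChartRing.map_coord]

namespace ProjSpace

variable {K} {n : ℕ}

lemma exists_fg_forall_mem_range_appLE {i : Fin (n + 1)} (t : Γ(ProjSpace K n, basicOpen K i)) :
    ∃ L₀ : IntermediateField k K, L₀.FG ∧ ∀ L : IntermediateField k K, L₀ ≤ L →
      t ∈ Set.range ((map L K n).appLE (basicOpen L i) (basicOpen K i)
        (map_preimage_basicOpen L K i).ge).hom := by
  obtain ⟨x, rfl⟩ := toSection_surjective K i t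
  obtain ⟨L₀, hL₀, h⟩ := ChartRing.exists_fg_forall_mem_range_map k x
  refine ⟨L₀, hL₀, fun L hL ↦ ?_⟩
  obtain ⟨y, rfl⟩ := h L hL
  exact ⟨toSection L i y, appLE_toSection L K i y⟩

lemma exists_fg_forall_comap_map_eq (I : (ProjSpace K n).IdealSheafData) :
    ∃ L₀ : IntermediateField k K, L₀.FG ∧ ∀ L : IntermediateField k K, L₀ ≤ L →
      (I.map (map L K n)).comap (map L K n) = I := by
  let U (F : Type) [Field F] (i : Fin (n + 1)) : (ProjSpace F n).affineOpens :=
    ⟨basicOpen F i, isAffineOpen_basicOpen F i⟩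
  have hI (i) : (I.ideal (U K i)).FG :=
    have := IsLocallyNoetherian.component_noetherian (U K i)
    IsNoetherian.noetherian _
  choose T hT using hI
  choose L₀ hL₀ h using fun i (t : T i) ↦ exists_fg_forall_mem_range_appLE k t.1
  refine ⟨⨆ i, ⨆ t, L₀ i t, IntermediateField.fg_iSup fun i ↦ IntermediateField.fg_iSup (hL₀ i),
    fun L hL ↦ comap_map_eq_of_ideal_le _ I (U K) (U L) (iSup_basicOpen L n)
      (map_preimage_basicOpen L K) fun i ↦ ?_⟩
  rw [← hT i]
  exact span_le_map_comap_span fun t ht ↦ h i ⟨t, ht⟩ L ((le_iSup₂ i _).trans hL)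

lemma exists_fg_forall_exists_isPullback {Y : Scheme} (f : Y ⟶ ProjSpace K n) [IsImmersion f] :
    ∃ L₀ : IntermediateField k K, L₀.FG ∧ ∀ L : IntermediateField k K, L₀ ≤ L →
      ∃ (Y' : Scheme) (f' : Y' ⟶ ProjSpace L n) (g : Y ⟶ Y'),
        IsImmersion f' ∧ IsPullback g f f' (map L K n) := by
  have := f.isEmbedding.isInducing.noetherianSpace
  obtain ⟨L₁, hL₁, hker⟩ := exists_fg_forall_comap_map_eq k f.ker
  obtain ⟨L₂, hL₂, hopen⟩ :=
    exists_fg_forall_comap_map_eq k (IdealSheafData.vanishingIdeal f.coborderRange.compl)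
  refine ⟨L₁ ⊔ L₂, IntermediateField.fg_sup hL₁ hL₂, fun L hL ↦ ?_⟩
  obtain ⟨V, hV⟩ := exists_preimage_eq_of_comap_map_vanishingIdeal _ _
    (hopen L (le_sup_right.trans hL))
  exact exists_isPullback_of_isImmersion _ f V hV (hker L (le_sup_left.trans hL))

end ProjSpace

end FieldOfDefinition

section DescentDatum

lemma fromSpecStalk_eqToHom {Y : Scheme} {x y : Y} (h : x = y) :
    Spec.map (eqToHom (congrArg Y.presheaf.stalk h)) ≫ Y.fromSpecStalk x = Y.fromSpecStalk y := by
  subst h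
  simp

instance isDominant_fromSpecStalk_genericPoint {Y : Scheme} [IrreducibleSpace Y] :
    IsDominant (Y.fromSpecStalk (genericPoint Y)) where
  denseRange := by
    rw [DenseRange, Scheme.range_fromSpecStalk]
    exact (dense_iff_closure_eq.mpr (genericPoint_spec Y)).mono
      (Set.singleton_subset_iff.mpr specializes_rfl)

lemma ProjSpace.exists_eq_SpecMap_comp_chart {R : Type} [CommRing R] {A : CommRingCat}
    [IsLocalRing A] {n : ℕ} (a : Spec A ⟶ ProjSpace R n) :
    ∃ (i : Fin (n + 1)) (ψ : ChartRing R i →+* A),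
      a = Spec.map (CommRingCat.ofHom ψ) ≫ chart R i := by
  have hcover : a (IsLocalRing.closedPoint A) ∈ ⨆ i, basicOpen R i := by
    simp [iSup_basicOpen R n]
  obtain ⟨i, hi⟩ := TopologicalSpace.Opens.mem_iSup.mp hcover
  have htop : a ⁻¹ᵁ (chart R i).opensRange = ⊤ := by
    rw [opensRange_chart]
    exact Scheme.preimage_eq_top_of_closedPoint_mem a hi
  obtain ⟨l, hl⟩ : ∃ l, l ≫ chart R i = a :=
    ⟨_, IsOpenImmersion.lift_fac (chart R i) a
      (Set.preimage_eq_univ_iff.mp congr(($htop : Set (Spec A))))⟩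
  exact ⟨i, (Spec.preimage l).hom, by simp [← hl]⟩

variable {k K}

namespace DescentDatum

variable {Y : Scheme} {p : Y ⟶ Spec (CommRingCat.of K)} (D : DescentDatum k K Y p)

section IrreducibleSpace

variable [IrreducibleSpace Y] (σ : K ≃ₐ[k] K)

lemma fromSpecStalk_comp_act_inv :
    Y.fromSpecStalk (genericPoint Y) ≫ (D.act σ⁻¹ : Aut Y).hom =
      Spec.map (D.ffAction σ) ≫ Y.fromSpecStalk (genericPoint Y) := by
  rw [ffAction, Spec.map_comp, Category.assoc,
    fromSpecStalk_eqToHom (aut_base_genericPoint (D.act σ⁻¹ : Aut Y)).symm]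
  exact (Scheme.SpecMap_stalkMap_fromSpecStalk _).symm

lemma ffAction_comp_of_fromSpecStalk_comp_eq {φ : K →+* Y.functionField}
    (hφ : Y.fromSpecStalk (genericPoint Y) ≫ p = Spec.map (CommRingCat.ofHom φ)) :
    (D.ffAction σ).hom.comp φ = φ.comp (σ : K →+* K) := by
  have h : Spec.map (CommRingCat.ofHom φ ≫ D.ffAction σ) =
      Spec.map (CommRingCat.ofHom (σ : K →+* K) ≫ CommRingCat.ofHom φ) := by
    rw [Spec.map_comp, Spec.map_comp, ← hφ, ← Category.assoc, ← fromSpecStalk_comp_act_inv,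
      Category.assoc, D.compat, specAut, inv_inv, Category.assoc]
  exact congr($(Spec.map_injective h).hom)

end IrreducibleSpace

variable {D} in
lemma IsContinuous.exists_fg_forall_act_comp_eq [IsIntegral Y] (hcont : D.IsContinuous) {n : ℕ}
    (f : Y ⟶ ProjSpace K n) (hf : f ≫ ProjSpace.structMap K n = p) :
    ∃ L₀ : IntermediateField k K, L₀.FG ∧ ∀ L : IntermediateField k K, L₀ ≤ L →
      ∀ σ ∈ L.fixingSubgroup, (D.act σ).hom ≫ f ≫ ProjSpace.map L K n =
        f ≫ ProjSpace.map L K n := by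
  obtain ⟨i, ψ, hψ⟩ := ProjSpace.exists_eq_SpecMap_comp_chart
    (Y.fromSpecStalk (genericPoint Y) ≫ f)
  choose L₀ hL₀ hfix using fun j ↦ hcont (ψ (ChartRing.coord K i j))
  refine ⟨⨆ j, L₀ j, IntermediateField.fg_iSup hL₀, fun L hL σ hσ ↦ ?_⟩
  rw [← inv_inv σ]
  replace hσ := (IntermediateField.mem_fixingSubgroup_iff L _).mp (inv_mem hσ)
  generalize σ⁻¹ = τ at hσ ⊢
  have hC : (D.ffAction τ).hom.comp (ψ.comp (ChartRing.C K i)) =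
      (ψ.comp (ChartRing.C K i)).comp τ := by
    refine D.ffAction_comp_of_fromSpecStalk_comp_eq τ ?_
    rw [← hf, reassoc_of% hψ, ProjSpace.chart_structMap, ← Spec.map_comp, CommRingCat.ofHom_comp]
  have hring : (D.ffAction τ).hom.comp (ψ.comp (ChartRing.map L K i)) =
      ψ.comp (ChartRing.map L K i) := by
    refine ChartRing.ringHom_ext ?_ fun j ↦ ?_
    · simp only [RingHom.comp_assoc, ChartRing.map_comp_C]
      ext x
      simpa [hσ] using congr($hC (x : K))
    · simpa [ChartRing.map_coord] using hfix j τ fun x hx ↦ hσ x (hL (le_iSup L₀ j hx))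
  have hgeneric : Y.fromSpecStalk (genericPoint Y) ≫ f ≫ ProjSpace.map L K n =
      Spec.map (CommRingCat.ofHom (ψ.comp (ChartRing.map L K i))) ≫ ProjSpace.chart L i := by
    rw [reassoc_of% hψ, ProjSpace.chart_map, CommRingCat.ofHom_comp, Spec.map_comp, Category.assoc]
  refine ext_of_isDominant (Y.fromSpecStalk (genericPoint Y)) ?_
  rw [← Category.assoc, fromSpecStalk_comp_act_inv, Category.assoc, hgeneric,
    ← Spec.map_comp_assoc]
  exact congr(Spec.map (CommRingCat.ofHom $hring) ≫ _)

lemma act_comp_isoPullback_hom {L : IntermediateField k K} {Y' : Scheme} {g : Y ⟶ Y'}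
    {q : Y' ⟶ Spec (CommRingCat.of L)}
    (h : IsPullback g p q (Spec.map (CommRingCat.ofHom (algebraMap L K)))) {σ : K ≃ₐ[k] K}
    (hσ : ∀ x ∈ L, σ x = x) (hg : (D.act σ).hom ≫ g = g) :
    (D.act σ).hom ≫ h.isoPullback.hom = h.isoPullback.hom ≫
      pullback.map _ _ _ _ (𝟙 Y') (specAut k K σ) (𝟙 (Spec (CommRingCat.of L)))
        (by simp) (by rw [Category.comp_id, specAut_comp_val k K L σ hσ]) := by
  apply pullback.hom_ext
  · simp only [pullback.map, Category.assoc, pullback.lift_fst, Category.comp_id,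
      h.isoPullback_hom_fst, hg]
  · simp only [pullback.map, Category.assoc, pullback.lift_snd, h.isoPullback_hom_snd,
      h.isoPullback_hom_snd_assoc, D.compat]

end DescentDatum

theorem descent_datum_effective_over_finitely_generated_subfield_general
    {Y : Scheme} [IsIntegral Y] {p : Y ⟶ Spec (CommRingCat.of K)}
    (hqp : QuasiProjectiveOver K p)
    {D : DescentDatum k K Y p} (hcont : D.IsContinuous) :
    ∃ L : IntermediateField k K, L.FG ∧
      ∃ (Y' : Scheme) (q : Y' ⟶ Spec (CommRingCat.of L))
        (e : Y ≅ pullback q (Spec.map (CommRingCat.ofHom (algebraMap L K)))),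
        QuasiProjectiveOver L q ∧
        e.hom ≫ pullback.snd q (Spec.map (CommRingCat.ofHom (algebraMap L K))) = p ∧
        ∀ (σ : K ≃ₐ[k] K) (hσ : ∀ x ∈ L, σ x = x),
          (D.act σ).hom ≫ e.hom = e.hom ≫
            pullback.map q (Spec.map (CommRingCat.ofHom (algebraMap L K)))
              q (Spec.map (CommRingCat.ofHom (algebraMap L K)))
              (𝟙 Y') (specAut k K σ) (𝟙 (Spec (CommRingCat.of L)))
              (by simp) (by rw [Category.comp_id, specAut_comp_val k K L σ hσ]) := by
  obtain ⟨n, f, hf_imm, hf⟩ := hqp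
  obtain ⟨L₁, hL₁, hdescent⟩ := ProjSpace.exists_fg_forall_exists_isPullback k f
  obtain ⟨L₂, hL₂, hinvariant⟩ := hcont.exists_fg_forall_act_comp_eq f hf
  obtain ⟨Y', f', g, _, hpullback⟩ := hdescent (L₁ ⊔ L₂) le_sup_left
  have hY := hpullback.paste_vert (ProjSpace.isPullback_map _ K n)
  rw [hf] at hY
  refine ⟨L₁ ⊔ L₂, IntermediateField.fg_sup hL₁ hL₂, Y', f' ≫ ProjSpace.structMap _ n,
    hY.isoPullback, ⟨n, f', inferInstance, rfl⟩, hY.isoPullback_hom_snd, fun σ hσ ↦ ?_⟩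
  refine D.act_comp_isoPullback_hom hY hσ ((cancel_mono f').mp ?_)
  rw [Category.assoc, hpullback.w]
  exact hinvariant _ le_sup_right σ ((IntermediateField.mem_fixingSubgroup_iff _ _).mpr hσ)

end DescentDatum

/-- A continuous descent datum is effective over a finitely generated
subfield: an integral quasi-projective `K`-scheme with a continuous descent datum with
respect to `K/k` descends, compatibly with the pointwise stabilizer of `L` in `Aut(K/k)`,
to a quasi-projective scheme over some intermediate field `L` finitely generated over `k`. -/
theorem descent_datum_effective_over_finitely_generated_subfield
    [CharZero k] [IsAlgClosed K]
    -- `K` has infinite transcendence degree over `k`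
    (htr : ∀ L : IntermediateField k K, L.FG → ∃ x : K, Transcendental L x)
    (Y : Scheme) [IsIntegral Y] (p : Y ⟶ Spec (CommRingCat.of K))
    -- `Y` is quasi-projective over `K`
    (hqp : QuasiProjectiveOver K p)
    -- a continuous descent datum on `Y` with respect to `K/k`
    (D : DescentDatum k K Y p) (hcont : D.IsContinuous) :
    ∃ L : IntermediateField k K, L.FG ∧
      ∃ (Y' : Scheme) (q : Y' ⟶ Spec (CommRingCat.of (↥L)))
        (e : Y ≅ pullback q (Spec.map (CommRingCat.ofHom (algebraMap (↥L) K)))),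
        -- `Y'` is quasi-projective over `L`
        QuasiProjectiveOver (↥L) q ∧
        -- the isomorphism is over `Spec K`
        e.hom ≫ pullback.snd q (Spec.map (CommRingCat.ofHom (algebraMap (↥L) K))) = p ∧
        -- for every `σ` fixing `L` pointwise, the action of `σ` on `Y` corresponds to
        -- `id_{Y'} × Spec (σ⁻¹)`
        ∀ (σ : K ≃ₐ[k] K) (hσ : ∀ x ∈ L, σ x = x),
          (D.act σ).hom ≫ e.hom = e.hom ≫
            pullback.map q (Spec.map (CommRingCat.ofHom (algebraMap (↥L) K)))
              q (Spec.map (CommRingCat.ofHom (algebraMap (↥L) K)))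
              (𝟙 Y') (specAut k K σ) (𝟙 (Spec (CommRingCat.of (↥L))))
              (by simp) (by rw [Category.comp_id, specAut_comp_val k K L σ hσ]) :=
  descent_datum_effective_over_finitely_generated_subfield_general hqp hcont

end Paper
end
end
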